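/- Let α be a type and A, B lists over α. Let i ≥ 2 be an integer, let q ≥ 3 be odd, set k = 2^{i−1}·q (an even integer) and m = (q+1)/2. Then S_{A,B}(k) = S(a*(m−1)) ⊕ S(m)^i, where S(m)^i denotes the concatenation of i copies of S(m). -/

import Mathlib

/-- Stern's diatomic sequence. -/
def stern : ℕ → ℕ
  | 0 => 0
  | 1 => 1
  | n + 2 =>
    if (n + 2) % 2 = 0 then stern ((n + 2) / 2)
    else stern ((n + 2) / 2) + stern ((n + 2) / 2 + 1)
decreasing_by all_goals omega

/-- OEIS A003602: a(1)=1, a(2n)=a(n), a(2n+1)=n+1. (a(0)=0 as junk value.) -/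
def aseq : ℕ → ℕ
  | 0 => 0
  | 1 => 1
  | n + 2 =>
    if (n + 2) % 2 = 0 then aseq ((n + 2) / 2)
    else (n + 2) / 2 + 1
decreasing_by all_goals omega

-- the modified sequence `a*`: zero at powers of two.
open Classical in
noncomputable def aStar (j : ℕ) : ℕ :=
  if ∃ k, j = 2 ^ k then 0 else aseq j

theorem aseq_le (n : ℕ) : aseq n ≤ n := by
  induction n using Nat.strong_induction_on with
  | _ n ih =>
    match n with
    | 0 => simp [aseq]
    | 1 => simp [aseq]
    | m + 2 =>
      rw [aseq]
      split
      · exact le_trans (ih ((m + 2) / 2) (by omega)) (by omega)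
      · omega

theorem aStar_le (j : ℕ) : aStar j ≤ j := by
  unfold aStar
  split
  · omega
  · exact aseq_le j

/-- The Markov-type sequence `S_{A,B}(n)`. -/
noncomputable def mseq {α : Type*} (A B : List α) : ℕ → List α
  | 0 => A
  | 1 => B
  | 2 => A ++ B
  | n + 3 =>
    if (n + 3) % 2 = 0 then
      mseq A B ((n + 3) / 2) ++ mseq A B (aseq ((n + 3) / 2))
    else
      mseq A B (aStar ((n + 4) / 2 - 1)) ++ mseq A B ((n + 4) / 2)
decreasing_by
  all_goals first
    | omega
    | exact lt_of_le_of_lt (aseq_le _) (by omega)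
    | exact lt_of_le_of_lt (aStar_le _) (by omega)

theorem aseq_two_mul (n : ℕ) : aseq (2 * n) = aseq n := by
  cases n with
  | zero => rfl
  | succ n =>
    rw [Nat.mul_succ, aseq, if_pos (by omega), show (2 * n + 2) / 2 = n + 1 by omega]

theorem aseq_two_mul_add_one (n : ℕ) : aseq (2 * n + 1) = n + 1 := by
  cases n with
  | zero => simp [aseq]
  | succ n =>
    rw [show 2 * (n + 1) + 1 = 2 * n + 1 + 2 by ring, aseq, if_neg (by omega)]
    omega

theorem aseq_two_pow_mul (j n : ℕ) : aseq (2 ^ j * n) = aseq n := by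
  induction j with
  | zero => rw [pow_zero, one_mul]
  | succ j ih => rw [pow_succ', mul_assoc, aseq_two_mul, ih]

section mseq

variable {α : Type*} (A B : List α) {n : ℕ}

theorem mseq_two_mul (hn : 2 ≤ n) :
    mseq A B (2 * n) = mseq A B n ++ mseq A B (aseq n) := by
  obtain ⟨l, rfl⟩ := Nat.exists_eq_add_of_le' hn
  rw [show 2 * (l + 2) = 2 * l + 1 + 3 by ring, mseq, if_pos (by omega),
    show (2 * l + 1 + 3) / 2 = l + 2 by omega]

theorem mseq_two_mul_add_one (hn : 1 ≤ n) :
    mseq A B (2 * n + 1) = mseq A B (aStar n) ++ mseq A B (n + 1) := by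
  obtain ⟨l, rfl⟩ := Nat.exists_eq_add_of_le' hn
  rw [show 2 * (l + 1) + 1 = 2 * l + 3 by ring, mseq, if_neg (by omega),
    show (2 * l + 4) / 2 = l + 1 + 1 by omega, Nat.add_sub_cancel]

-- Each doubling appends the same block, because `aseq` is invariant under doubling.
theorem mseq_two_pow_mul (hn : 2 ≤ n) (j : ℕ) :
    mseq A B (2 ^ j * n) =
      mseq A B n ++ (List.replicate j (mseq A B (aseq n))).flatten := by
  induction j with
  | zero => simp
  | succ j ih =>
    have two_le : 2 ≤ 2 ^ j * n := hn.trans (Nat.le_mul_of_pos_left n (by positivity))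
    rw [pow_succ', mul_assoc, mseq_two_mul A B two_le, ih, aseq_two_pow_mul,
      List.replicate_succ', List.flatten_concat, List.append_assoc]

end mseq

/-- for `i ≥ 2`, odd `q ≥ 3`, `k = 2^{i−1}·q` and `m = (q+1)/2`,
`S_{A,B}(k) = S(a*(m−1)) ⊕ S(m)^i`. -/
theorem stmt11 {α : Type*} (A B : List α) (i q : ℕ) (hi : 2 ≤ i) (hq : 3 ≤ q)
    (hodd : Odd q) :
    mseq A B (2 ^ (i - 1) * q) =
      mseq A B (aStar ((q + 1) / 2 - 1)) ++
        (List.replicate i (mseq A B ((q + 1) / 2))).flatten := by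
  obtain ⟨m, rfl⟩ := hodd
  obtain ⟨j, rfl⟩ := Nat.exists_eq_add_of_le' (Nat.one_le_of_lt hi)
  have half : (2 * m + 1 + 1) / 2 = m + 1 := by omega
  rw [half, Nat.add_sub_cancel, Nat.add_sub_cancel, mseq_two_pow_mul A B (by omega),
    aseq_two_mul_add_one, mseq_two_mul_add_one A B (by omega), List.replicate_succ,
    List.flatten_cons, List.append_assoc]
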